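/- For all integers m ≥ 1 and n ≥ 1, the power sum S_m(n) = Σ_{j=1}^{n} j^m satisfies S_m(n) = Σ_{k=1}^{m} (T(m,k)/(k+1)) · I_{k+1}(n). -/

import Mathlib

/-!
Let `J_k(x) = ∏_{i<k} (x + f_i)` be the basis with the reflected nodes `0, 1, -1, 2, -2, …`.
The first `k + 1` of these nodes are the consecutive integers `-⌊k/2⌋, …, ⌈k/2⌉`, so `T(m,k)` is
the divided difference of `x ↦ x^m` at them, and Newton interpolation gives
`x^m = ∑_k T(m,k) J_k(x)` (`pow_eq_sum_flickT`). This is proved by induction on `m` from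
`x J_k = J_{k+1} - f_k J_k` and the matching recurrence
`T(m+1,k+1) = T(m,k) - f_{k+1} T(m,k+1)` (`flickT_succ_succ`).

On the other side, `I_{k+1}` is a product over `k + 1` consecutive integers, and its backward
difference is `I_{k+1}(x) - I_{k+1}(x-1) = (k+1) J_k(x)` (`intFlick_sub`). Since `I_{k+1}(0) = 0`,
telescoping gives `∑_{j=1}^n J_k(j) = I_{k+1}(n) / (k+1)`, and summing the Newton expansion over
`j` yields the formula.
-/

open Finset

/-- Normalized flickering central finite difference `T(n,k)` (OEIS A395021),
`T(n,k) = (1/k!) · Σ_{i=0}^{k} (-1)^{k-i} C(k,i) (i - ⌊k/2⌋)^n`. -/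
def flickT (n k : ℕ) : ℚ :=
  (1 / (Nat.factorial k : ℚ)) *
    ∑ i ∈ Finset.range (k + 1),
      (-1 : ℚ) ^ (k - i) * (Nat.choose k i : ℚ) * ((i : ℚ) - ((k / 2 : ℕ) : ℚ)) ^ n

/-- The nodes `f_i` of the integral flickering basis: `0, -1, 1, -2, 2, …`. -/
def fSeq (i : ℕ) : ℚ := if i % 2 = 1 then -(((i + 1) / 2 : ℕ) : ℚ) else (((i / 2 : ℕ)) : ℚ)

/-- The integral flickering basis `I_k(x) = ∏_{i=0}^{k-1} (x - f_i)`,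
so `I_1(x) = x`, `I_2(x) = x(x+1)`, `I_3(x) = x(x+1)(x-1)`, … -/
def intFlick (k : ℕ) (x : ℚ) : ℚ := ∏ i ∈ Finset.range k, (x - fSeq i)

/-- The reflected flickering basis `J_k(x) = ∏_{i<k} (x + f_i)`, with nodes
`0, 1, -1, 2, -2, …`, so that `J_k(x) = (-1)^k I_k(-x)`. -/
def reflFlick (k : ℕ) (x : ℚ) : ℚ := ∏ i ∈ Finset.range k, (x + fSeq i)

lemma fSeq_even (j : ℕ) : fSeq (2 * j) = j := by
  simp [fSeq]

lemma fSeq_odd (j : ℕ) : fSeq (2 * j + 1) = -((j : ℚ) + 1) := by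
  have h1 : (2 * j + 1) % 2 = 1 := by omega
  have h2 : (2 * j + 1 + 1) / 2 = j + 1 := by omega
  simp [fSeq, h1, h2]

lemma intFlick_succ (k : ℕ) (x : ℚ) : intFlick (k + 1) x = intFlick k x * (x - fSeq k) :=
  Finset.prod_range_succ _ _

lemma reflFlick_succ (k : ℕ) (x : ℚ) : reflFlick (k + 1) x = reflFlick k x * (x + fSeq k) :=
  Finset.prod_range_succ _ _

/-- An odd number of nodes is symmetric about `0`, so reflecting changes nothing. -/
lemma reflFlick_odd (j : ℕ) (x : ℚ) : reflFlick (2 * j + 1) x = intFlick (2 * j + 1) x := by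
  induction j with
  | zero => simp [reflFlick, intFlick, fSeq]
  | succ j ih =>
    have e : 2 * (j + 1) + 1 = 2 * j + 1 + 1 + 1 := by ring
    have f := fSeq_even (j + 1)
    rw [show 2 * (j + 1) = 2 * j + 1 + 1 by ring] at f
    rw [e, reflFlick_succ, reflFlick_succ, intFlick_succ, intFlick_succ, ih, f, fSeq_odd]
    push_cast
    ring

/-- For an even number of nodes, shifting the nodes by `1` is the same as reflecting them. -/
lemma intFlick_even_sub_one (j : ℕ) (x : ℚ) :
    intFlick (2 * j) (x - 1) = reflFlick (2 * j) x := by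
  induction j with
  | zero => simp [reflFlick, intFlick]
  | succ j ih =>
    rw [show 2 * (j + 1) = 2 * j + 1 + 1 by ring, reflFlick_succ, reflFlick_succ, intFlick_succ,
      intFlick_succ, ih, fSeq_even, fSeq_odd]
    ring

/-- The backward difference of the integral flickering basis. -/
lemma intFlick_sub (k : ℕ) (x : ℚ) :
    intFlick (k + 1) x - intFlick (k + 1) (x - 1) = ((k : ℚ) + 1) * reflFlick k x := by
  obtain ⟨j, rfl | rfl⟩ := Nat.even_or_odd' k
  · rw [← reflFlick_odd, reflFlick_succ, intFlick_succ, intFlick_even_sub_one, fSeq_even]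
    push_cast
    ring
  · have h := intFlick_even_sub_one (j + 1) x
    rw [show 2 * (j + 1) = 2 * j + 1 + 1 by ring] at h
    rw [h, intFlick_succ, reflFlick_succ, ← reflFlick_odd, fSeq_odd]
    push_cast
    ring

lemma intFlick_succ_zero (k : ℕ) : intFlick (k + 1) 0 = 0 :=
  Finset.prod_eq_zero (Finset.mem_range.2 k.succ_pos) (by simp [fSeq])

lemma sum_reflFlick (k n : ℕ) :
    ∑ j ∈ Finset.Icc 1 n, reflFlick k (j : ℚ) = intFlick (k + 1) n / ((k : ℚ) + 1) := by
  have hk : (k : ℚ) + 1 ≠ 0 := by positivity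
  rw [eq_div_iff hk]
  induction n with
  | zero => simp [intFlick_succ_zero]
  | succ n ih =>
    have h := intFlick_sub k ((n : ℚ) + 1)
    rw [add_sub_cancel_right] at h
    rw [Finset.sum_Icc_succ_top (by omega), add_mul, ih]
    push_cast
    linarith

lemma flickT_zero_zero : flickT 0 0 = 1 := by
  simp [flickT]

lemma flickT_zero_right {m : ℕ} (hm : 1 ≤ m) : flickT m 0 = 0 := by
  have : m ≠ 0 := by omega
  simp [flickT, this]

/-- The `k`-th difference of a constant vanishes: this is the binomial expansion of
`(1 - 1)^k`. -/
lemma flickT_zero_succ (k : ℕ) : flickT 0 (k + 1) = 0 := by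
  have h := add_pow (1 : ℚ) (-1) (k + 1)
  simp only [add_neg_cancel, one_pow, one_mul] at h
  simp only [flickT, pow_zero, mul_one]
  rw [← h]
  simp

/-- The Leibniz rule for divided differences of `x · x^m`, where `-f_{k+1}` is the last of the
nodes used by `T(m,k+1)`. When `k + 1` is odd that node is the top one, and the term `i = k + 1`
drops out; when `k + 1` is even it is the bottom one, and the term `i = 0` drops out. -/
lemma flickT_succ_succ (m k : ℕ) :
    flickT (m + 1) (k + 1) = flickT m k - fSeq (k + 1) * flickT m (k + 1) := by
  have hf : ((k + 1).factorial : ℚ) = ((k : ℚ) + 1) * (k.factorial : ℚ) := by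
    rw [Nat.factorial_succ]; push_cast; ring
  have h0 : (k.factorial : ℚ) ≠ 0 := by positivity
  have h1 : (k : ℚ) + 1 ≠ 0 := by positivity
  -- after clearing factorials, only an identity between the alternating sums is left
  suffices H : ∑ i ∈ Finset.range (k + 1 + 1), (-1 : ℚ) ^ (k + 1 - i) * ((k + 1).choose i : ℚ) *
        ((i : ℚ) - (((k + 1) / 2 : ℕ) : ℚ)) ^ m *
          (((i : ℚ) - (((k + 1) / 2 : ℕ) : ℚ)) + fSeq (k + 1))
      = ((k : ℚ) + 1) * ∑ i ∈ Finset.range (k + 1), (-1 : ℚ) ^ (k - i) * (k.choose i : ℚ) *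
        ((i : ℚ) - ((k / 2 : ℕ) : ℚ)) ^ m by
    have H' : ∀ a b c : ℚ, a + fSeq (k + 1) * b = ((k : ℚ) + 1) * c →
        1 / ((k + 1).factorial : ℚ) * a = 1 / (k.factorial : ℚ) * c
          - fSeq (k + 1) * (1 / ((k + 1).factorial : ℚ) * b) := by
      intro a b c h
      rw [hf]
      field_simp
      linarith
    apply H'
    rw [← H, Finset.mul_sum, ← Finset.sum_add_distrib]
    refine Finset.sum_congr rfl fun i _ => ?_
    ring
  obtain ⟨j, rfl | rfl⟩ := Nat.even_or_odd' k
  · have e1 : (2 * j + 1) / 2 = j := by omega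
    have e2 : 2 * j / 2 = j := by omega
    rw [fSeq_odd, e1, e2, Finset.sum_range_succ, Finset.mul_sum]
    have hlast : (((2 * j + 1 : ℕ) : ℚ) - (j : ℚ)) + -((j : ℚ) + 1) = 0 := by
      push_cast; ring
    rw [hlast, mul_zero, add_zero]
    refine Finset.sum_congr rfl fun i hi => ?_
    have hi' : i ≤ 2 * j := by simpa [Nat.lt_succ_iff] using hi
    have hc : ((2 * j : ℕ) + 1 : ℚ) * ((2 * j).choose i : ℚ)
        = ((2 * j + 1).choose i : ℚ) * ((2 * j : ℕ) + 1 - (i : ℚ)) := by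
      have h' := Nat.choose_mul_succ_eq (2 * j) i
      have h'' : ((2 * j + 1 - i : ℕ) : ℚ) = (2 * j : ℕ) + 1 - (i : ℚ) := by
        rw [Nat.cast_sub (by omega)]; push_cast; ring
      rw [← h'']
      rw [mul_comm]
      exact_mod_cast h'
    rw [show 2 * j + 1 - i = 2 * j - i + 1 by omega, pow_succ]
    push_cast at hc ⊢
    linear_combination (-(-1 : ℚ) ^ (2 * j - i) * ((i : ℚ) - j) ^ m) * hc
  · have e1 : (2 * j + 1 + 1) / 2 = j + 1 := by omega
    have e2 : (2 * j + 1) / 2 = j := by omega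
    have f := fSeq_even (j + 1)
    rw [show 2 * (j + 1) = 2 * j + 1 + 1 by ring] at f
    rw [f, e1, e2, Finset.sum_range_succ', Finset.mul_sum]
    have hfirst : (((0 : ℕ) : ℚ) - ((j + 1 : ℕ) : ℚ)) + ((j + 1 : ℕ) : ℚ) = 0 := by
      push_cast; ring
    rw [hfirst, mul_zero, add_zero]
    refine Finset.sum_congr rfl fun i hi => ?_
    have hc : ((2 * j + 1 : ℕ) + 1 : ℚ) * ((2 * j + 1).choose i : ℚ)
        = ((2 * j + 1 + 1).choose (i + 1) : ℚ) * ((i : ℚ) + 1) := by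
      exact_mod_cast Nat.add_one_mul_choose_eq (2 * j + 1) i
    rw [show 2 * j + 1 + 1 - (i + 1) = 2 * j + 1 - i by omega,
      show ((i + 1 : ℕ) : ℚ) - ((j + 1 : ℕ) : ℚ) = (i : ℚ) - j by push_cast; ring]
    push_cast at hc ⊢
    linear_combination (-(-1 : ℚ) ^ (2 * j + 1 - i) * ((i : ℚ) - j) ^ m) * hc

lemma flickT_eq_zero (m : ℕ) : ∀ k, m < k → flickT m k = 0 := by
  induction m with
  | zero =>
    rintro (_ | k) hk
    · omega
    · exact flickT_zero_succ k
  | succ m ih =>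
    rintro (_ | k) hk
    · omega
    · rw [flickT_succ_succ, ih k (by omega), ih (k + 1) (by omega)]
      ring

lemma flickT_succ_zero (m : ℕ) : flickT (m + 1) 0 = 0 := flickT_zero_right (by omega)

/-- Newton interpolation of `x^m` at the nodes `0, 1, -1, 2, -2, …`. -/
lemma pow_eq_sum_flickT (m : ℕ) (x : ℚ) :
    x ^ m = ∑ k ∈ Finset.range (m + 1), flickT m k * reflFlick k x := by
  induction m with
  | zero => simp [flickT_zero_zero, reflFlick]
  | succ m ih =>
    have hshift : ∑ k ∈ Finset.range (m + 1), fSeq (k + 1) * flickT m (k + 1) * reflFlick (k + 1) x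
        = ∑ k ∈ Finset.range (m + 1), fSeq k * flickT m k * reflFlick k x := by
      have h := Finset.sum_range_succ' (fun k => fSeq k * flickT m k * reflFlick k x) (m + 1)
      rw [Finset.sum_range_succ, flickT_eq_zero m (m + 1) (by omega)] at h
      have hf0 : fSeq 0 = 0 := by simp [fSeq]
      simp only [hf0] at h
      linarith
    rw [Finset.sum_range_succ', flickT_succ_zero, zero_mul, add_zero]
    simp only [flickT_succ_succ, sub_mul]
    rw [Finset.sum_sub_distrib, hshift, ← Finset.sum_sub_distrib, pow_succ, ih, Finset.sum_mul]
    refine Finset.sum_congr rfl fun k _ => ?_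
    rw [reflFlick_succ]
    ring

/-- For all integers `m ≥ 1` and `n ≥ 1`, the power sum `S_m(n) = Σ_{j=1}^{n} j^m` satisfies
`S_m(n) = Σ_{k=1}^{m} (T(m,k)/(k+1)) · I_{k+1}(n)`. -/
theorem powerSum_eq_flick (m n : ℕ) (hm : 1 ≤ m) (hn : 1 ≤ n) :
    ∑ j ∈ Finset.Icc 1 n, (j : ℚ) ^ m
      = ∑ k ∈ Finset.Icc 1 m, (flickT m k / ((k : ℚ) + 1)) * intFlick (k + 1) (n : ℚ) := by
  have hnewton (x : ℚ) : x ^ m = ∑ k ∈ Finset.Icc 1 m, flickT m k * reflFlick k x := by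
    rw [pow_eq_sum_flickT, Finset.range_eq_Ico, Finset.sum_eq_sum_Ico_succ_bot (by omega),
      flickT_zero_right hm, zero_mul, zero_add]
    rfl
  simp only [hnewton]
  rw [Finset.sum_comm]
  refine Finset.sum_congr rfl fun k _ => ?_
  rw [← Finset.mul_sum, sum_reflFlick]
  ring
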